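/- arXiv:1601.07113 — 2 statements merged into one kernel-verified Lean document; each statement's English description precedes it below -/
import Mathlib

section
/- Let α > 0, β > 0, t₀ > 0, let Φ : H → ℝ be convex and twice continuously differentiable, and let x : [t₀, ∞) → H be a solution of (DIN-AVD). Then: (i) if (tₙ) is a sequence with tₙ → ∞ such that x(tₙ) converges weakly to some z ∈ H, then z ∈ argmin Φ; (ii) if ‖x(t)‖ does not tend to +∞ as t → ∞, then argmin Φ is nonempty. -/
open Filter MeasureTheory Set
open scoped Topology RealInnerProductSpace

variable {H : Type*} [NormedAddCommGroup H] [InnerProductSpace ℝ H] [CompleteSpace H]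

/-- `x`, together with its first and second derivatives `x'`, `x''`, is a twice continuously
differentiable solution of (DIN-AVD) on `[t₀, ∞)`:
`ẍ(t) + (α/t) ẋ(t) + β ∇²Φ(x(t)) ẋ(t) + ∇Φ(x(t)) = 0`. -/
def IsDINAVDSolution (α β t₀ : ℝ) (Φ : H → ℝ) (x x' x'' : ℝ → H) : Prop :=
  (∀ t ∈ Set.Ici t₀, HasDerivAt x (x' t) t) ∧
  (∀ t ∈ Set.Ici t₀, HasDerivAt x' (x'' t) t) ∧
  ContinuousOn x'' (Set.Ici t₀) ∧
  ∀ t ∈ Set.Ici t₀,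
    x'' t + (α / t) • x' t + β • (fderiv ℝ (gradient Φ) (x t)) (x' t)
      + gradient Φ (x t) = 0

theorem aux_anti (f f' : ℝ → ℝ) (T : ℝ) (hf : ∀ t, T ≤ t → HasDerivAt f (f' t) t)
    (hn : ∀ t, T ≤ t → f' t ≤ 0) : ∀ s t, T ≤ s → s ≤ t → f t ≤ f s := by
  have : AntitoneOn f (Set.Ici T) := by
    apply antitoneOn_of_hasDerivWithinAt_nonpos (f' := f') (convex_Ici T)
    · intro t ht
      exact (hf t ht).continuousAt.continuousWithinAt
    · intro t ht
      rw [interior_Ici] at ht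
      exact (hf t (le_of_lt ht)).hasDerivWithinAt
    · intro t ht
      rw [interior_Ici] at ht
      exact hn t (le_of_lt ht)
  intro s t hs hst
  exact this hs (le_trans hs hst) hst

/-- Young-type bounds for the mixed term `b` with `b ^ 2 ≤ a * d`. -/
theorem aux_young (β a b d : ℝ) (ha : 0 ≤ a) (hd : 0 ≤ d) (hb : b ^ 2 ≤ a * d) :
    2 * |β * b| ≤ a + β ^ 2 * d := by
  have h1 : (2 * |β * b|) ^ 2 ≤ (a + β ^ 2 * d) ^ 2 := by
    rw [mul_pow, sq_abs, mul_pow]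
    nlinarith [sq_nonneg (a - β ^ 2 * d), mul_le_mul_of_nonneg_left hb (sq_nonneg β)]
  exact le_of_sq_le_sq h1 (by positivity)
where
  le_of_sq_le_sq {p q : ℝ} (h : p ^ 2 ≤ q ^ 2) (hq : 0 ≤ q) : p ≤ q := abs_le_of_sq_le_sq' h hq |>.2

theorem aux_Wderiv (α β t a b d : ℝ) (hα : 0 < α) (hβ : 0 < β) (ht : 0 < t) (htT : α * β ≤ t)
    (ha : 0 ≤ a) (hd : 0 ≤ d) (hb : b ^ 2 ≤ a * d) :
    -(α / t) * a - (α * β / t) * b - β * d ≤ -(α / 2) * (a / t) - (β / 2) * d := by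
  have hy := aux_young β a b d ha hd hb
  have hneg : -(β * b) ≤ |β * b| := neg_le_abs _
  have e : -(α / t) * a - (α * β / t) * b - β * d - (-(α / 2) * (a / t) - (β / 2) * d)
      = (-(α / 2) * a - α * (β * b) - (β / 2) * d * t) / t := by
    field_simp
    ring
  have : (-(α / 2) * a - α * (β * b) - (β / 2) * d * t) / t ≤ 0 := by
    apply div_nonpos_of_nonpos_of_nonneg _ ht.le
    have h1 : α * (-(β * b)) ≤ α * ((a + β ^ 2 * d) / 2) :=
      mul_le_mul_of_nonneg_left (by linarith) hα.le
    have h2 : (β / 2 * d) * (α * β) ≤ (β / 2 * d) * t :=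
      mul_le_mul_of_nonneg_left htT (by positivity)
    nlinarith
  linarith

/-- The scalar Lyapunov argument. -/
theorem aux_scalar (α β T ε : ℝ) (hα : 0 < α) (hβ : 0 < β) (hT1 : 1 ≤ T) (hT : α * β ≤ T)
    (hε : 0 < ε) (W h h1 m a b d φ : ℝ → ℝ)
    (hWdef : ∀ t, T ≤ t → W t = φ t + (a t + 2 * β * b t + β ^ 2 * d t) / 2)
    (hW : ∀ t, T ≤ t → HasDerivAt W (-(α / t) * a t - (α * β / t) * b t - β * d t) t)
    (hh : ∀ t, T ≤ t → HasDerivAt h (h1 t) t)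
    (hk : ∀ t, T ≤ t → HasDerivAt (fun t => h1 t + β * m t)
      (a t + β * b t - (α / t) * h1 t - m t) t)
    (ha : ∀ t, 0 ≤ a t) (hd : ∀ t, 0 ≤ d t) (hb : ∀ t, b t ^ 2 ≤ a t * d t)
    (hm : ∀ t, φ t ≤ m t) (hh0 : ∀ t, 0 ≤ h t) (hlow : ∀ t, T ≤ t → ε ≤ W t) : False := by
  obtain ⟨δ, hδ, hδα, hδβ⟩ : ∃ δ : ℝ, 0 < δ ∧ δ ≤ α / 2 ∧ δ ≤ β / 2 :=
    ⟨min (α / 2) (β / 2), by positivity, min_le_left _ _, min_le_right _ _⟩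
  -- the dissipated quantity
  set p : ℝ → ℝ := fun t => a t / t + d t with hp
  have hWp : ∀ t, T ≤ t → -(α / t) * a t - (α * β / t) * b t - β * d t ≤ -δ * p t := by
    intro t ht
    have ht0 : 0 < t := by linarith
    have := aux_Wderiv α β t (a t) (b t) (d t) hα hβ ht0 (by linarith) (ha t) (hd t) (hb t)
    have h1 : δ * (a t / t) ≤ α / 2 * (a t / t) :=
      mul_le_mul_of_nonneg_right hδα (div_nonneg (ha t) ht0.le)
    have h2 : δ * d t ≤ β / 2 * d t := mul_le_mul_of_nonneg_right hδβ (hd t)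
    simp only [hp]
    linarith
  -- C bounds all error terms
  set C : ℝ := 4 + 4 * β ^ 2 + β * (4 + 4 * β ^ 2) with hC
  have hC0 : 0 < C := by positivity
  have hQ : ∀ t, T ≤ t → (a t + β ^ 2 * d t) / t ≤ (1 + β ^ 2) * p t := by
    intro t ht
    have ht0 : 0 < t := by linarith
    have h1 : d t / t ≤ d t := div_le_self (hd t) (by linarith)
    have h2 : 0 ≤ a t / t := div_nonneg (ha t) ht0.le
    have e : (a t + β ^ 2 * d t) / t = a t / t + β ^ 2 * (d t / t) := by ring
    rw [e]
    simp only [hp]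
    nlinarith [mul_le_mul_of_nonneg_left h1 (sq_nonneg β), hd t, mul_nonneg (sq_nonneg β) h2]
  have hp0 : ∀ t, T ≤ t → 0 ≤ p t := fun t ht =>
    add_nonneg (div_nonneg (ha t) (by linarith)) (hd t)
  have hmlow : ∀ t, T ≤ t → ε - (a t + β ^ 2 * d t) ≤ m t := by
    intro t ht
    have hy := aux_young β (a t) (b t) (d t) (ha t) (hd t) (hb t)
    have := le_abs_self (β * b t)
    have := hlow t ht
    rw [hWdef t ht] at this
    have := hm t
    nlinarith
  -- first Lyapunov function
  have hF : ∀ t, T ≤ t → HasDerivAt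
      (fun t => (h1 t + β * m t) / t + (α + 1) * (h t / t ^ 2) + C / δ * W t + ε * Real.log t)
      (((a t + β * b t - (α / t) * h1 t - m t) * t - (h1 t + β * m t) * 1) / t ^ 2
        + (α + 1) * ((h1 t * t ^ 2 - h t * (2 * t)) / (t ^ 2) ^ 2)
        + C / δ * (-(α / t) * a t - (α * β / t) * b t - β * d t) + ε * t⁻¹) t := by
    intro t ht
    have ht0 : t ≠ 0 := by linarith
    have hsq : HasDerivAt (fun t : ℝ => t ^ 2) (2 * t) t := by
      simpa using hasDerivAt_pow 2 t
    exact ((((hk t ht).div (hasDerivAt_id t) ht0).add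
      (((hh t ht).div hsq (pow_ne_zero 2 ht0)).const_mul (α + 1))).add
      ((hW t ht).const_mul (C / δ))).add ((Real.hasDerivAt_log ht0).const_mul ε)
  have hFanti := aux_anti _ _ T hF (by
    intro t ht
    have ht0 : 0 < t := by linarith
    have e : ((a t + β * b t - (α / t) * h1 t - m t) * t - (h1 t + β * m t) * 1) / t ^ 2
        + (α + 1) * ((h1 t * t ^ 2 - h t * (2 * t)) / (t ^ 2) ^ 2)
        = (a t + β * b t - m t) / t - β * (m t / t) / t - 2 * (α + 1) * (h t / t ^ 3) := by
      field_simp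
      ring
    rw [e]
    have hy := aux_young β (a t) (b t) (d t) (ha t) (hd t) (hb t)
    have hy' := le_abs_self (β * b t)
    have hml := hmlow t ht
    have hq := hQ t ht
    have q1 : (a t + β * b t - m t) / t ≤ (3 * (a t + β ^ 2 * d t) - ε) / t := by
      apply div_le_div_of_nonneg_right _ ht0.le
      nlinarith [mul_nonneg (sq_nonneg β) (hd t), ha t]
    have q1' : (3 * (a t + β ^ 2 * d t) - ε) / t = 3 * ((a t + β ^ 2 * d t) / t) - ε * t⁻¹ := by
      ring
    have q2 : -(m t / t) ≤ (1 + β ^ 2) * p t := by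
      refine le_trans ?_ hq
      rw [← neg_div]
      apply div_le_div_of_nonneg_right _ ht0.le
      linarith
    have q3 : -(β * (m t / t) / t) ≤ β * ((1 + β ^ 2) * p t) := by
      have : -(β * (m t / t) / t) = β * (-(m t / t)) / t := by ring
      rw [this]
      refine le_trans (div_le_div_of_nonneg_right (mul_le_mul_of_nonneg_left q2 hβ.le) ht0.le) ?_
      exact div_le_self (by have := hp0 t ht; positivity) (by linarith)
    have q4 : 0 ≤ 2 * (α + 1) * (h t / t ^ 3) := by
      have := hh0 t
      positivity
    have q5 : C / δ * (-(α / t) * a t - (α * β / t) * b t - β * d t) ≤ - C * p t := by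
      refine le_trans (mul_le_mul_of_nonneg_left (hWp t ht) (by positivity)) (le_of_eq ?_)
      field_simp
    have q6 : 3 * ((1 + β ^ 2) * p t) + β * ((1 + β ^ 2) * p t) ≤ C * p t := by
      rw [← sub_nonneg]
      have : C * p t - (3 * ((1 + β ^ 2) * p t) + β * ((1 + β ^ 2) * p t))
        = ((1 + β ^ 2) + 3 * β * (1 + β ^ 2)) * p t := by rw [hC]; ring
      rw [this]
      have := hp0 t ht
      positivity
    linarith)
  obtain ⟨C1, hC1⟩ : ∃ C1 : ℝ, ∀ t, T ≤ t → (h1 t + β * m t) / t ≤ C1 - ε * Real.log t := by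
    refine ⟨(h1 T + β * m T) / T + (α + 1) * (h T / T ^ 2) + C / δ * W T + ε * Real.log T,
      fun t ht => ?_⟩
    · have h2 := hFanti T t le_rfl ht
      have h3 : 0 ≤ (α + 1) * (h t / t ^ 2) := by
        have := hh0 t
        positivity
      have h4 : 0 ≤ C / δ * W t := by
        have := hlow t ht
        have : 0 ≤ W t := by linarith
        positivity
      rw [le_sub_iff_add_le]
      refine le_trans ?_ h2
      linarith
  -- past T2 the right side is at most -1
  obtain ⟨T2, hT2T, hT2⟩ : ∃ T2, T ≤ T2 ∧ ∀ t, T2 ≤ t → C1 - ε * Real.log t ≤ -1 := by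
    have : ∀ᶠ t in atTop, (C1 + 1) / ε ≤ Real.log t :=
      Real.tendsto_log_atTop.eventually_ge_atTop _
    obtain ⟨T2, hT2⟩ := eventually_atTop.1 this
    refine ⟨max T T2, le_max_left _ _, fun t ht => ?_⟩
    have := hT2 t (le_trans (le_max_right _ _) ht)
    rw [div_le_iff₀ hε] at this
    linarith
  have hG : ∀ t, T2 ≤ t → HasDerivAt (fun t => h t / t + C / δ * W t + t)
      ((h1 t * t - h t * 1) / t ^ 2
        + C / δ * (-(α / t) * a t - (α * β / t) * b t - β * d t) + 1) t := by
    intro t ht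
    have ht' := le_trans hT2T ht
    have ht0 : t ≠ 0 := by linarith
    exact (((hh t ht').div (hasDerivAt_id t) ht0).add
      ((hW t ht').const_mul (C / δ))).add (hasDerivAt_id t)
  have hGanti := aux_anti _ _ T2 hG (by
    intro t htt
    have ht := le_trans hT2T htt
    have ht0 : 0 < t := by linarith
    have e : (h1 t * t - h t * 1) / t ^ 2 = (h1 t + β * m t) / t + β * (-(m t / t)) - h t / t ^ 2 := by
      field_simp
      ring
    rw [e]
    have q0 := hC1 t ht
    have q1 := hT2 t htt
    have hml := hmlow t ht
    have q2 : -(m t / t) ≤ (1 + β ^ 2) * p t := by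
      refine le_trans ?_ (hQ t ht)
      rw [← neg_div]
      apply div_le_div_of_nonneg_right _ ht0.le
      linarith
    have q3 := mul_le_mul_of_nonneg_left q2 hβ.le
    have q4 : 0 ≤ h t / t ^ 2 := by
      have := hh0 t
      positivity
    have q5 : C / δ * (-(α / t) * a t - (α * β / t) * b t - β * d t) ≤ - C * p t := by
      refine le_trans (mul_le_mul_of_nonneg_left (hWp t ht) (by positivity)) (le_of_eq ?_)
      field_simp
    have q6 : β * ((1 + β ^ 2) * p t) ≤ C * p t := by
      rw [← sub_nonneg]
      have : C * p t - (β * ((1 + β ^ 2) * p t))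
        = (4 + 4 * β ^ 2 + 3 * β * (1 + β ^ 2)) * p t := by rw [hC]; ring
      rw [this]
      have := hp0 t ht
      positivity
    linarith)
  set c0 := h T2 / T2 + C / δ * W T2 + T2 with hc0
  have hbound : ∀ t, T2 ≤ t → t ≤ c0 := by
    intro t ht
    have h2 := hGanti T2 t le_rfl ht
    have ht0 : 0 < t := by linarith
    have h3 : 0 ≤ h t / t := div_nonneg (hh0 t) ht0.le
    have h4 : 0 ≤ C / δ * W t := by
      have := hlow t (le_trans hT2T ht)
      have : 0 ≤ W t := by linarith
      positivity
    linarith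
  have := hbound (max T2 (c0 + 1)) (le_max_left _ _)
  have := le_max_right T2 (c0 + 1)
  linarith

theorem aux_grad_diff (Φ : H → ℝ) (hΦ : ContDiff ℝ 2 Φ) : Differentiable ℝ (gradient Φ) := by
  have h1 : Differentiable ℝ (fderiv ℝ Φ) :=
    (hΦ.fderiv_right (m := 1) (by norm_num)).differentiable (by norm_num)
  intro y
  exact ((InnerProductSpace.toDual ℝ H).symm.toContinuousLinearEquiv.differentiableAt).comp y (h1 y)

theorem aux_grad_ineq (Φ : H → ℝ) (hconv : ConvexOn ℝ Set.univ Φ) (hΦ : ContDiff ℝ 2 Φ) (y z : H) :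
    Φ y + ⟪gradient Φ y, z - y⟫ ≤ Φ z := by
  have hd : HasGradientAt Φ (gradient Φ y) y :=
    ((hΦ.differentiable (by norm_num)) y).hasGradientAt
  have hline : HasDerivAt (fun s : ℝ => Φ (y + s • (z - y))) ⟪gradient Φ y, z - y⟫ 0 := by
    have h1 : HasDerivAt (fun s : ℝ => y + s • (z - y)) (z - y) 0 := by
      simpa using ((hasDerivAt_id (0 : ℝ)).smul_const (z - y)).const_add y
    have h2 : HasFDerivAt Φ (InnerProductSpace.toDual ℝ H (gradient Φ y))
        ((fun s : ℝ => y + s • (z - y)) 0) := by simpa using hd.hasFDerivAt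
    exact h2.comp_hasDerivAt (0 : ℝ) h1
  have hc : ConvexOn ℝ Set.univ (fun s : ℝ => Φ (y + s • (z - y))) := by
    have := hconv.comp_affineMap (AffineMap.lineMap y z : ℝ →ᵃ[ℝ] H)
    have e : (fun s : ℝ => Φ (y + s • (z - y))) = Φ ∘ (AffineMap.lineMap y z : ℝ →ᵃ[ℝ] H) := by
      funext s
      simp [AffineMap.lineMap_apply, add_comm]
    rw [e]
    exact this
  have := hc.le_slope_of_hasDerivAt (Set.mem_univ 0) (Set.mem_univ 1) one_pos hline
  simp only [slope_def_field, zero_smul, one_smul, add_zero, add_sub_cancel, sub_zero, div_one] at this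
  linarith

theorem aux_limsup (α β t₀ : ℝ) (hα : 0 < α) (hβ : 0 < β) 
    (Φ : H → ℝ) (hconv : ConvexOn ℝ Set.univ Φ) (hΦ : ContDiff ℝ 2 Φ)
    (x x' x'' : ℝ → H) (hsol : IsDINAVDSolution α β t₀ Φ x x' x'') (w : H) (ε : ℝ) (hε : 0 < ε) :
    ∀ᶠ t in atTop, Φ (x t) ≤ Φ w + ε := by
  obtain ⟨hx, hx', -, heq⟩ := hsol
  set T : ℝ := max t₀ (max 1 (α * β)) with hTdef
  have hTt : t₀ ≤ T := le_max_left _ _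
  have hT1 : 1 ≤ T := le_trans (le_max_left _ _) (le_max_right _ _)
  have hTab : α * β ≤ T := le_trans (le_max_right _ _) (le_max_right _ _)
  set g : ℝ → H := fun t => gradient Φ (x t) with hg
  set u : ℝ → H := fun t => x' t + β • g t with hu
  set W : ℝ → ℝ := fun t => (Φ (x t) - Φ w) + ⟪u t, u t⟫ / 2 with hWd
  have hgd : ∀ t, T ≤ t → HasDerivAt g (fderiv ℝ (gradient Φ) (x t) (x' t)) t := by
    intro t ht
    exact ((aux_grad_diff Φ hΦ (x t)).hasFDerivAt).comp_hasDerivAt t (hx t (le_trans hTt ht))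
  have hud : ∀ t, T ≤ t → HasDerivAt u (-((α / t) • x' t) - g t) t := by
    intro t ht
    have h1 := (hx' t (le_trans hTt ht)).add ((hgd t ht).const_smul β)
    refine HasDerivAt.congr_deriv (f := u) h1 ?_
    have := heq t (le_trans hTt ht)
    rw [← sub_eq_zero, ← this]
    simp only [hg]
    abel
  have hΦd : ∀ t, T ≤ t → HasDerivAt (fun t => Φ (x t)) ⟪g t, x' t⟫ t := by
    intro t ht
    have hd : HasGradientAt Φ (gradient Φ (x t)) (x t) :=
      ((hΦ.differentiable (by norm_num)) (x t)).hasGradientAt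
    exact hd.hasFDerivAt.comp_hasDerivAt t (hx t (le_trans hTt ht))
  have hWder : ∀ t, T ≤ t → HasDerivAt W
      (-(α / t) * ⟪x' t, x' t⟫ - (α * β / t) * ⟪g t, x' t⟫ - β * ⟪g t, g t⟫) t := by
    intro t ht
    have h1 := ((hΦd t ht).sub_const (Φ w)).add (((hud t ht).inner ℝ (hud t ht)).div_const 2)
    refine HasDerivAt.congr_deriv (f := W) h1 ?_
    simp only [hu, inner_add_left, inner_add_right, inner_sub_left, inner_sub_right,
      inner_neg_left, inner_neg_right, real_inner_smul_left, real_inner_smul_right]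
    rw [real_inner_comm (g t) (x' t)]
    ring
  have hcs : ∀ t, ⟪g t, x' t⟫ ^ 2 ≤ ⟪x' t, x' t⟫ * ⟪g t, g t⟫ := by
    intro t
    have := real_inner_mul_inner_self_le (g t) (x' t)
    nlinarith
  have hWanti := aux_anti W _ T hWder (by
    intro t ht
    have ht0 : 0 < t := by linarith
    refine le_trans (aux_Wderiv α β t _ _ _ hα hβ ht0 (by linarith) real_inner_self_nonneg
      real_inner_self_nonneg (hcs t)) ?_
    have h1 : 0 ≤ ⟪x' t, x' t⟫ / t := div_nonneg real_inner_self_nonneg ht0.le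
    have h2 : 0 ≤ ⟪g t, g t⟫ := real_inner_self_nonneg
    nlinarith [mul_nonneg hα.le h1, mul_nonneg hβ.le h2])
  have hex : ∃ s, T ≤ s ∧ W s < ε := by
    by_contra hcon
    push Not at hcon
    refine aux_scalar α β T ε hα hβ hT1 hTab hε W (fun t => ⟪x t - w, x t - w⟫ / 2)
      (fun t => ⟪x' t, x t - w⟫) (fun t => ⟪g t, x t - w⟫) (fun t => ⟪x' t, x' t⟫)
      (fun t => ⟪g t, x' t⟫) (fun t => ⟪g t, g t⟫) (fun t => Φ (x t) - Φ w)
      ?_ hWder ?_ ?_ (fun t => real_inner_self_nonneg) (fun t => real_inner_self_nonneg) hcs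
      ?_ (fun t => div_nonneg real_inner_self_nonneg (by norm_num)) hcon
    · intro t ht
      simp only [hWd, hu, inner_add_left, inner_add_right, real_inner_smul_left,
        real_inner_smul_right]
      rw [real_inner_comm (g t) (x' t)]
      ring
    · intro t ht
      have h0 := (hx t (le_trans hTt ht)).sub_const w
      have h1 := (h0.inner ℝ h0).div_const 2
      refine HasDerivAt.congr_deriv h1 ?_
      rw [real_inner_comm (x' t) (x t - w)]
      ring
    · intro t ht
      have h0 := (hx t (le_trans hTt ht)).sub_const w
      have h1 := (hud t ht).inner ℝ h0
      have e : (fun t => ⟪x' t, x t - w⟫ + β * ⟪g t, x t - w⟫) = fun t => ⟪u t, x t - w⟫ := by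
        funext s
        simp only [hu, inner_add_left, real_inner_smul_left]
      rw [e]
      refine HasDerivAt.congr_deriv h1 ?_
      simp only [hu, inner_add_left, inner_sub_left, inner_neg_left, real_inner_smul_left]
      ring
    · intro t
      have := aux_grad_ineq Φ hconv hΦ (x t) w
      rw [← neg_sub (x t) w, inner_neg_right] at this
      simp only [hg]
      linarith
  obtain ⟨s, hs, hsW⟩ := hex
  filter_upwards [eventually_ge_atTop s] with t ht
  have h1 := hWanti s t hs ht
  have h2 : 0 ≤ ⟪u t, u t⟫ := real_inner_self_nonneg
  simp only [hWd] at h1 hsW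
  linarith

theorem aux_filter (Φ : H → ℝ) (hconv : ConvexOn ℝ Set.univ Φ) (hΦ : ContDiff ℝ 2 Φ)
    (x : ℝ → H) (hlim : ∀ (w : H) (ε : ℝ), 0 < ε → ∀ᶠ t in atTop, Φ (x t) ≤ Φ w + ε)
    (F : Filter ℝ) [F.NeBot] (hF : F ≤ atTop) (z : H)
    (hz : ∀ y : H, Tendsto (fun t => ⟪x t, y⟫) F (𝓝 ⟪z, y⟫)) (w : H) : Φ z ≤ Φ w := by
  apply le_of_forall_pos_le_add
  intro ε hε
  have h1 : Tendsto (fun t => Φ z + (⟪x t, gradient Φ z⟫ - ⟪z, gradient Φ z⟫)) F (𝓝 (Φ z)) := by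
    simpa using ((hz (gradient Φ z)).sub_const ⟪z, gradient Φ z⟫).const_add (Φ z)
  refine le_of_tendsto h1 ?_
  filter_upwards [hF (hlim w ε hε)] with t ht
  have h2 := aux_grad_ineq Φ hconv hΦ z (x t)
  rw [real_inner_comm, inner_sub_left] at h2
  exact le_trans h2 ht

theorem stmt2 (α β t₀ : ℝ) (hα : 0 < α) (hβ : 0 < β) (ht₀ : 0 < t₀)
    (Φ : H → ℝ) (hconv : ConvexOn ℝ Set.univ Φ) (hΦ : ContDiff ℝ 2 Φ)
    (x x' x'' : ℝ → H) (hsol : IsDINAVDSolution α β t₀ Φ x x' x'') :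
    (∀ (tseq : ℕ → ℝ) (z : H), Tendsto tseq atTop atTop →
      (∀ y : H, Tendsto (fun n => ⟪x (tseq n), y⟫) atTop (𝓝 ⟪z, y⟫)) →
      ∀ w : H, Φ z ≤ Φ w) ∧
    (¬ Tendsto (fun t => ‖x t‖) atTop atTop → ∃ z : H, ∀ w : H, Φ z ≤ Φ w) := by
  have hlim := aux_limsup α β t₀ hα hβ Φ hconv hΦ x x' x'' hsol
  constructor
  · intro tseq z ht hz w
    exact aux_filter Φ hconv hΦ x hlim (map tseq atTop) ht z (fun y => tendsto_map'_iff.2 (hz y)) w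
  · intro hnot
    rw [tendsto_atTop] at hnot
    push Not at hnot
    obtain ⟨M, hM⟩ := hnot
    have hfr : ∃ᶠ t in atTop, ‖x t‖ ≤ M := by
      refine Frequently.mono hM ?_
      intro t ht
      exact (not_le.1 (by simpa using ht)).le
    have hne : (atTop ⊓ 𝓟 {t : ℝ | ‖x t‖ ≤ M}).NeBot := frequently_mem_iff_neBot.1 hfr
    set U := Ultrafilter.of (atTop ⊓ 𝓟 {t : ℝ | ‖x t‖ ≤ M}) with hU
    have hUle : (U : Filter ℝ) ≤ atTop ⊓ 𝓟 {t : ℝ | ‖x t‖ ≤ M} := Ultrafilter.of_le _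
    have hcomp := WeakDual.isCompact_closedBall (𝕜 := ℝ) (0 : StrongDual ℝ H) M
    let f : ℝ → WeakDual ℝ H := fun t => StrongDual.toWeakDual (InnerProductSpace.toDual ℝ H (x t))
    obtain ⟨ξ, -, hξ⟩ := hcomp.ultrafilter_le_nhds (U.map f) (by
      rw [le_principal_iff]
      show f ⁻¹' _ ∈ (U : Filter ℝ)
      refine mem_of_superset (hUle (mem_inf_of_right (mem_principal_self _))) ?_
      intro t ht
      simpa [f] using ht)
    refine ⟨(InnerProductSpace.toDual ℝ H).symm (WeakDual.toStrongDual ξ), ?_⟩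
    refine aux_filter Φ hconv hΦ x hlim (U : Filter ℝ) (hUle.trans inf_le_left) _ ?_
    intro y
    have h1 : Tendsto f U (𝓝 ξ) := hξ
    have h2 := ((WeakDual.eval_continuous (𝕜 := ℝ) y).tendsto ξ).comp h1
    rw [InnerProductSpace.toDual_symm_apply]
    exact h2
end

section
/- Let α > 3, β > 0, t₀ > 0, let Φ : H → ℝ be convex and twice continuously differentiable with x* ∈ argmin Φ, and let x : [t₀, ∞) → H be a solution of (DIN-AVD). Then: (i) ∫_{t₀}^∞ t(Φ(x(t)) − min Φ) dt < ∞ and ∫_{t₀}^∞ t‖ẋ(t)‖² dt < ∞; (ii) ∫_{t₀}^∞ t⟨x(t) − x*, ∇Φ(x(t))⟩ dt < ∞; (iii) the limits lim_{t→∞} ‖x(t) − x*‖ and lim_{t→∞} t⟨x(t) − x*, ẋ(t) + β∇Φ(x(t))⟩ exist. -/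
open Filter MeasureTheory Set
open scoped Topology RealInnerProductSpace

variable {H : Type*} [NormedAddCommGroup H] [InnerProductSpace ℝ H] [CompleteSpace H]

lemma aux_antitone {h h' : ℝ → ℝ} {T : ℝ} (hd : ∀ t ∈ Ici T, HasDerivAt h (h' t) t)
    (hn : ∀ t ∈ Ici T, h' t ≤ 0) : AntitoneOn h (Ici T) := by
  apply antitoneOn_of_deriv_nonpos (convex_Ici T)
  · exact fun t ht => (hd t ht).continuousAt.continuousWithinAt
  · intro t ht
    exact (hd t (interior_subset ht)).differentiableAt.differentiableWithinAt
  · intro t ht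
    rw [(hd t (interior_subset ht)).deriv]
    exact hn t (interior_subset ht)

lemma aux_conv {h h' : ℝ → ℝ} {T : ℝ} (hd : ∀ t ∈ Ici T, HasDerivAt h (h' t) t)
    (hn : ∀ t ∈ Ici T, h' t ≤ 0) (hp : ∀ t ∈ Ici T, 0 ≤ h t) :
    ∃ L, Tendsto h atTop (𝓝 L) := by
  have ha := aux_antitone hd hn
  have h1 : Antitone (fun t => h (max t T)) := fun a b hab =>
    ha (mem_Ici.2 (le_max_right _ _)) (mem_Ici.2 (le_max_right _ _)) (max_le_max_right _ hab)
  have h2 : BddBelow (range (fun t => h (max t T))) :=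
    ⟨0, by rintro _ ⟨t, rfl⟩; exact hp _ (mem_Ici.2 (le_max_right _ _))⟩
  refine ⟨_, (tendsto_atTop_ciInf h1 h2).congr' ?_⟩
  filter_upwards [eventually_ge_atTop T] with t ht
  simp [max_eq_left ht]

lemma aux_upper {h h' : ℝ → ℝ} {T k L : ℝ} (hk : 0 < k)
    (hd : ∀ t ∈ Ici T, HasDerivAt h (h' t) t)
    (hl : Tendsto (fun t => k * h t + t * h' t) atTop (𝓝 (k * L))) (ε : ℝ) (hε : 0 < ε) :
    ∀ᶠ t in atTop, h t < L + ε := by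
  have h1 : ∀ᶠ t in atTop, k * h t + t * h' t < k * (L + ε / 2) :=
    hl.eventually_lt_const (by nlinarith)
  obtain ⟨S, hS⟩ := eventually_atTop.1 h1
  set R := max (max S T) 1 with hR
  have hRS : S ≤ R := (le_max_left _ _).trans (le_max_left _ _)
  have hRT : T ≤ R := (le_max_right _ _).trans (le_max_left _ _)
  have hR1 : 1 ≤ R := le_max_right _ _
  have hder : ∀ t ∈ Ici R, HasDerivAt (fun t => t ^ k * (h t - (L + ε / 2)))
      (t ^ (k - 1) * (k * h t + t * h' t - k * (L + ε / 2))) t := by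
    intro t ht
    have ht' : R ≤ t := ht
    have t0 : 0 < t := by linarith
    have := (Real.hasDerivAt_rpow_const (p := k) (Or.inl t0.ne')).mul
      ((hd t (hRT.trans ht)).sub_const (L + ε / 2))
    refine HasDerivAt.congr_deriv this ?_
    have e : t ^ k = t ^ (k - 1) * t := by
      rw [← Real.rpow_add_one t0.ne']; ring_nf
    rw [e]; ring
  have hanti := aux_antitone hder (by
    intro t ht
    have ht' : R ≤ t := ht
    have t0 : 0 < t := by linarith
    have := hS t (hRS.trans ht)
    exact mul_nonpos_of_nonneg_of_nonpos (Real.rpow_nonneg t0.le _) (by linarith))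
  set C := R ^ k * (h R - (L + ε / 2)) with hC
  have hz : Tendsto (fun t : ℝ => C * t ^ (-k)) atTop (𝓝 (C * 0)) :=
    (tendsto_rpow_neg_atTop hk).const_mul C
  rw [mul_zero] at hz
  filter_upwards [hz.eventually_lt_const (half_pos hε), eventually_ge_atTop R] with t h3 h4
  have t0 : 0 < t := by linarith
  have h5 : t ^ k * (h t - (L + ε / 2)) ≤ C := hanti (self_mem_Ici) h4 h4
  have h6 := mul_le_mul_of_nonneg_right h5 (Real.rpow_nonneg t0.le (-k))
  have h7 : t ^ k * t ^ (-k) = 1 := by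
    rw [← Real.rpow_add t0]; simp
  have h8 : t ^ k * (h t - (L + ε / 2)) * t ^ (-k) = h t - (L + ε / 2) := by
    calc _ = (t ^ k * t ^ (-k)) * (h t - (L + ε / 2)) := by ring
      _ = _ := by rw [h7, one_mul]
  linarith

lemma aux_lim {h h' : ℝ → ℝ} {T k L : ℝ} (hk : 0 < k)
    (hd : ∀ t ∈ Ici T, HasDerivAt h (h' t) t)
    (hl : Tendsto (fun t => k * h t + t * h' t) atTop (𝓝 (k * L))) :
    Tendsto h atTop (𝓝 L) := by
  rw [Metric.tendsto_nhds]
  intro ε hε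
  have hl2 : Tendsto (fun t => k * (-h t) + t * (-h' t)) atTop (𝓝 (k * (-L))) := by
    have := hl.neg
    rw [← mul_neg] at this
    refine this.congr fun t => ?_
    ring
  filter_upwards [aux_upper hk hd hl ε hε,
    aux_upper (h := fun t => - h t) hk (fun t ht => (hd t ht).neg) hl2 ε hε] with t h1 h2
  rw [Real.dist_eq, abs_lt]
  constructor <;> linarith

lemma aux_grad {Φ : H → ℝ} (hΦ : ContDiff ℝ 2 Φ) (z : H) :
    HasFDerivAt Φ (innerSL ℝ (gradient Φ z)) z := by
  have : HasGradientAt Φ (gradient Φ z) z :=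
    ((hΦ.differentiable (by norm_num)) z).hasGradientAt
  exact this.hasFDerivAt

lemma aux_gradC {Φ : H → ℝ} (hΦ : ContDiff ℝ 2 Φ) : ContDiff ℝ 1 (gradient Φ) := by
  have h1 : ContDiff ℝ 1 (fderiv ℝ Φ) := hΦ.fderiv_right (by norm_num)
  exact (InnerProductSpace.toDual ℝ H).symm.toContinuousLinearEquiv.contDiff.comp h1

lemma aux_convex {Φ : H → ℝ} (hconv : ConvexOn ℝ univ Φ) (hΦ : ContDiff ℝ 2 Φ) (z p : H) :
    Φ z - Φ p ≤ ⟪z - p, gradient Φ z⟫ := by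
  have h1 : ConvexOn ℝ univ (Φ ∘ AffineMap.lineMap (k := ℝ) z p) := by
    simpa using hconv.comp_affineMap (AffineMap.lineMap (k := ℝ) z p)
  have h2 : HasDerivAt (Φ ∘ AffineMap.lineMap (k := ℝ) z p) (⟪gradient Φ z, p - z⟫) 0 := by
    have hl : HasDerivAt (AffineMap.lineMap (k := ℝ) z p) (p - z) (0:ℝ) :=
      AffineMap.hasDerivAt_lineMap
    have hg := aux_grad hΦ (AffineMap.lineMap (k := ℝ) z p 0)
    have := hg.comp_hasDerivAt (0:ℝ) hl
    simpa using this
  have h3 := h1.le_slope_of_hasDerivAt (mem_univ _) (mem_univ _) zero_lt_one h2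
  rw [slope_def_field] at h3
  simp only [Function.comp, AffineMap.lineMap_apply_zero, AffineMap.lineMap_apply_one, sub_zero, div_one] at h3
  have h4 : ⟪gradient Φ z, p - z⟫ = - ⟪z - p, gradient Φ z⟫ := by
    rw [← neg_sub z p, inner_neg_right, real_inner_comm]
  linarith

lemma aux_sol {α β t₀ : ℝ} (ht₀ : 0 < t₀) {Φ : H → ℝ} (hΦ : ContDiff ℝ 2 Φ) (xstar : H)
    {x x' x'' : ℝ → H} (hsol : IsDINAVDSolution α β t₀ Φ x x' x'') (lam t : ℝ) (ht : t ∈ Ici t₀) :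
    HasDerivAt (fun t => (t * (t - β + (α - 1 - lam) * β)) * (Φ (x t) - Φ xstar)
        + 1 / 2 * lam * (α - 1) * ⟪x t - xstar, x t - xstar⟫
        + lam * (t * ⟪x t - xstar, x' t + β • gradient Φ (x t)⟫)
        + 1 / 2 * t ^ 2 * ⟪x' t + β • gradient Φ (x t), x' t + β • gradient Φ (x t)⟫)
      ((2 * t - β + (α - 1 - lam) * β) * (Φ (x t) - Φ xstar)
        - lam * (t - β) * ⟪x t - xstar, gradient Φ (x t)⟫
        - (α - 1 - lam) * (t * ‖x' t‖ ^ 2)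
        - t * β * (t - β) * ‖gradient Φ (x t)‖ ^ 2) t := by
  obtain ⟨h1, h2, -, h4⟩ := hsol
  have t0 : 0 < t := ht₀.trans_le ht
  have hx := h1 t ht
  have hy : HasDerivAt (fun t => x t - xstar) (x' t) t := hx.sub_const xstar
  have hg : HasDerivAt (fun t => gradient Φ (x t)) (fderiv ℝ (gradient Φ) (x t) (x' t)) t :=
    (((aux_gradC hΦ).differentiable (by norm_num)) (x t)).hasFDerivAt.comp_hasDerivAt t hx
  have hw : HasDerivAt (fun t => x' t + β • gradient Φ (x t))
      (-(α / t) • x' t - gradient Φ (x t)) t := by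
    refine HasDerivAt.congr_deriv ((h2 t ht).add (hg.const_smul β)) ?_
    have := h4 t ht
    rw [← sub_eq_zero, ← this]
    module
  have hf : HasDerivAt (fun t => Φ (x t) - Φ xstar) (⟪gradient Φ (x t), x' t⟫) t := by
    have := ((aux_grad hΦ (x t)).comp_hasDerivAt t hx).sub_const (Φ xstar)
    simpa using this
  have hid := hasDerivAt_id' t
  have hyy := hy.inner ℝ hy
  have hyw := hy.inner ℝ hw
  have hww := hw.inner ℝ hw
  have ha : HasDerivAt (fun t => t * (t - β + (α - 1 - lam) * β))
      (2 * t - β + (α - 1 - lam) * β) t := by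
    refine HasDerivAt.congr_deriv (hid.mul ((hid.sub_const β).add_const ((α - 1 - lam) * β))) ?_
    ring
  have hs : HasDerivAt (fun t : ℝ => 1 / 2 * t ^ 2) t t := by
    refine HasDerivAt.congr_deriv ((hasDerivAt_pow 2 t).const_mul (1 / 2 : ℝ)) ?_
    simp
  refine HasDerivAt.congr_deriv ((((ha.mul hf).add (hyy.const_mul (1 / 2 * lam * (α - 1)))).add
    ((hid.mul hyw).const_mul lam)).add (hs.mul hww)) ?_
  rw [← real_inner_self_eq_norm_sq, ← real_inner_self_eq_norm_sq]
  generalize x t - xstar = y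
  generalize gradient Φ (x t) = g
  generalize x' t = v
  simp only [inner_add_left, inner_add_right, inner_sub_left, inner_sub_right,
    real_inner_smul_left, real_inner_smul_right]
  rw [real_inner_comm v y, real_inner_comm v g]
  field_simp
  ring

lemma aux_E {α β t₀ : ℝ} (hβ : 0 < β) (ht₀ : 0 < t₀) {Φ : H → ℝ}
    (hconv : ConvexOn ℝ Set.univ Φ) (hΦ : ContDiff ℝ 2 Φ) (xstar : H)
    (hmin : ∀ z, Φ xstar ≤ Φ z)
    {x x' x'' : ℝ → H} (hsol : IsDINAVDSolution α β t₀ Φ x x' x'') (lam : ℝ)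
    (hl : 2 < lam) (hl' : lam ≤ α - 1) (E : ℝ → ℝ)
    (hE : E = (fun t => (t * (t - β + (α - 1 - lam) * β)) * (Φ (x t) - Φ xstar)
        + 1 / 2 * lam * (α - 1) * ⟪x t - xstar, x t - xstar⟫
        + lam * (t * ⟪x t - xstar, x' t + β • gradient Φ (x t)⟫)
        + 1 / 2 * t ^ 2 * ⟪x' t + β • gradient Φ (x t), x' t + β • gradient Φ (x t)⟫)) :
    ∃ T D, t₀ + β ≤ T ∧ (∃ L, Tendsto E atTop (𝓝 L)) ∧ IntegrableOn D (Ioi T) ∧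
      (∀ t ∈ Ici T, (lam - 2) / 2 * (t * ⟪x t - xstar, gradient Φ (x t)⟫)
        + (α - 1 - lam) * (t * ‖x' t‖ ^ 2) ≤ D t) ∧
      (∀ t ∈ Ici T, t * (t - β) * (Φ (x t) - Φ xstar) ≤ E t) := by
  set T := t₀ + β + 2 * (α - 2) * β / (lam - 2) with hT
  have hl2 : 0 < lam - 2 := by linarith
  have hq : 0 ≤ 2 * (α - 2) * β / (lam - 2) :=
    div_nonneg (mul_nonneg (by linarith) hβ.le) hl2.le
  have hTt : ∀ t ∈ Ici T, t₀ ≤ t ∧ β ≤ t ∧ 2 * (α - 2) * β ≤ (lam - 2) * t := by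
    intro t ht
    have ht' : T ≤ t := ht
    refine ⟨by linarith, by linarith, ?_⟩
    have : 2 * (α - 2) * β / (lam - 2) ≤ t := by linarith
    rw [div_le_iff₀ hl2] at this
    linarith
  set G : ℝ → ℝ := fun t => (2 * t - β + (α - 1 - lam) * β) * (Φ (x t) - Φ xstar)
        - lam * (t - β) * ⟪x t - xstar, gradient Φ (x t)⟫
        - (α - 1 - lam) * (t * ‖x' t‖ ^ 2)
        - t * β * (t - β) * ‖gradient Φ (x t)‖ ^ 2 with hG
  have hd : ∀ t ∈ Ici T, HasDerivAt E (G t) t := by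
    intro t ht
    rw [hE]
    exact aux_sol ht₀ hΦ xstar hsol lam t (hTt t ht).1
  have hbd : ∀ t ∈ Ici T, (lam - 2) / 2 * (t * ⟪x t - xstar, gradient Φ (x t)⟫)
        + (α - 1 - lam) * (t * ‖x' t‖ ^ 2) ≤ - G t := by
    intro t ht
    obtain ⟨a1, a2, a3⟩ := hTt t ht
    have hf := sub_nonneg.2 (hmin (x t))
    have hc := aux_convex hconv hΦ (x t) xstar
    have hg : 0 ≤ t * β * (t - β) * ‖gradient Φ (x t)‖ ^ 2 := by
      have := sub_nonneg.2 a2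
      have : 0 ≤ t := by linarith
      positivity
    have h1 : (2 * t - β + (α - 1 - lam) * β) * (Φ (x t) - Φ xstar) ≤
        (2 * t - β + (α - 1 - lam) * β) * ⟪x t - xstar, gradient Φ (x t)⟫ := by
      apply mul_le_mul_of_nonneg_left hc
      have : 0 ≤ (α - 1 - lam) * β := mul_nonneg (by linarith) hβ.le
      linarith
    have h2 := mul_nonneg (sub_nonneg.2 a3) (hf.trans hc)
    simp only [hG]
    linarith
  have hinn : ∀ t ∈ Ici T, 0 ≤ ⟪x t - xstar, gradient Φ (x t)⟫ := fun t _ =>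
    (sub_nonneg.2 (hmin (x t))).trans (aux_convex hconv hΦ (x t) xstar)
  have hneg : ∀ t ∈ Ici T, G t ≤ 0 := by
    intro t ht
    obtain ⟨a1, a2, a3⟩ := hTt t ht
    have h1 := hbd t ht
    have h2 := hinn t ht
    have h3 : 0 ≤ t := by linarith
    have h4 : 0 ≤ α - 1 - lam := by linarith
    have : 0 ≤ (lam - 2) / 2 * (t * ⟪x t - xstar, gradient Φ (x t)⟫)
        + (α - 1 - lam) * (t * ‖x' t‖ ^ 2) := by positivity
    linarith
  have hlow : ∀ t ∈ Ici T, t * (t - β) * (Φ (x t) - Φ xstar) ≤ E t := by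
    intro t ht
    obtain ⟨a1, a2, a3⟩ := hTt t ht
    have hf := sub_nonneg.2 (hmin (x t))
    have h3 : 0 ≤ t := by linarith
    have h4 : 0 ≤ α - 1 - lam := by linarith
    have e1 : 0 ≤ ⟪lam • (x t - xstar) + t • (x' t + β • gradient Φ (x t)),
      lam • (x t - xstar) + t • (x' t + β • gradient Φ (x t))⟫ := real_inner_self_nonneg
    have e2 : 0 ≤ ⟪x t - xstar, x t - xstar⟫ := real_inner_self_nonneg
    have e3 : 0 ≤ lam * (α - 1 - lam) * ⟪x t - xstar, x t - xstar⟫ := by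
      have : 0 ≤ lam := by linarith
      positivity
    have e4 : 0 ≤ t * ((α - 1 - lam) * β) * (Φ (x t) - Φ xstar) := by positivity
    rw [hE]
    beta_reduce
    generalize x' t + β • gradient Φ (x t) = w at *
    generalize x t - xstar = y at *
    simp only [inner_add_left, inner_add_right,
      real_inner_smul_left, real_inner_smul_right] at e1
    rw [real_inner_comm y w] at e1
    linarith
  have hpos : ∀ t ∈ Ici T, 0 ≤ E t := by
    intro t ht
    obtain ⟨a1, a2, a3⟩ := hTt t ht
    have hf := sub_nonneg.2 (hmin (x t))
    exact (mul_nonneg (mul_nonneg (by linarith) (by linarith)) hf).trans (hlow t ht)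
  obtain ⟨L, hL⟩ := aux_conv hd hneg hpos
  refine ⟨T, fun t => - G t, by linarith, ⟨L, hL⟩, ?_, hbd, hlow⟩
  exact (integrableOn_Ioi_deriv_of_nonpos' hd (fun t ht => hneg t (mem_Ici.2 (le_of_lt ht))) hL).neg

lemma aux_int {f D : ℝ → ℝ} {t₀ T : ℝ} (κ : ℝ) (hκ : 0 < κ) (hT : t₀ ≤ T)
    (hc : ContinuousOn f (Ici t₀))
    (hD : IntegrableOn D (Ioi T)) (h0 : ∀ t ∈ Ici T, 0 ≤ f t)
    (hle : ∀ t ∈ Ici T, κ * f t ≤ D t) : IntegrableOn f (Ici t₀) := by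
  have h1 : IntegrableOn f (Icc t₀ T) := (hc.mono Icc_subset_Ici_self).integrableOn_Icc
  have h2 : IntegrableOn f (Ioi T) := by
    refine Integrable.mono' (hD.const_mul κ⁻¹)
      ((hc.mono (fun t ht => hT.trans (le_of_lt ht))).aestronglyMeasurable measurableSet_Ioi) ?_
    filter_upwards [ae_restrict_mem measurableSet_Ioi] with t ht
    have ht' : t ∈ Ici T := mem_Ici.2 (le_of_lt ht)
    rw [Real.norm_of_nonneg (h0 t ht'), inv_mul_eq_div, le_div_iff₀ hκ, mul_comm]
    exact hle t ht'
  rw [← Icc_union_Ioi_eq_Ici hT]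
  exact h1.union h2

theorem stmt8 (α β t₀ : ℝ) (hα : 3 < α) (hβ : 0 < β) (ht₀ : 0 < t₀)
    (Φ : H → ℝ) (hconv : ConvexOn ℝ Set.univ Φ) (hΦ : ContDiff ℝ 2 Φ)
    (xstar : H) (hmin : ∀ z, Φ xstar ≤ Φ z)
    (x x' x'' : ℝ → H) (hsol : IsDINAVDSolution α β t₀ Φ x x' x'') :
    IntegrableOn (fun t => t * (Φ (x t) - Φ xstar)) (Set.Ici t₀) ∧
    IntegrableOn (fun t => t * ‖x' t‖ ^ 2) (Set.Ici t₀) ∧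
    IntegrableOn (fun t => t * ⟪x t - xstar, gradient Φ (x t)⟫) (Set.Ici t₀) ∧
    (∃ L : ℝ, Tendsto (fun t => ‖x t - xstar‖) atTop (𝓝 L)) ∧
    (∃ L : ℝ, Tendsto (fun t => t * ⟪x t - xstar, x' t + β • gradient Φ (x t)⟫)
      atTop (𝓝 L)) := by
  obtain ⟨T, D, hT, ⟨L1, hL1⟩, hD, hbd, hlow⟩ := aux_E hβ ht₀ hconv hΦ xstar hmin hsol
    ((α + 1) / 2) (by linarith) (by linarith) _ rfl
  obtain ⟨T2, D2, hT2, ⟨L2, hL2⟩, -⟩ := aux_E hβ ht₀ hconv hΦ xstar hmin hsol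
    (α - 1) (by linarith) (by linarith) _ rfl
  have hsol' := hsol
  obtain ⟨h1, h2, -, h4⟩ := hsol'
  have hf : ∀ t, 0 ≤ Φ (x t) - Φ xstar := fun t => sub_nonneg.2 (hmin (x t))
  have hc : ∀ t, Φ (x t) - Φ xstar ≤ ⟪x t - xstar, gradient Φ (x t)⟫ :=
    fun t => aux_convex hconv hΦ (x t) xstar
  have cx : ContinuousOn x (Ici t₀) := fun t ht => (h1 t ht).continuousAt.continuousWithinAt
  have cx' : ContinuousOn x' (Ici t₀) := fun t ht => (h2 t ht).continuousAt.continuousWithinAt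
  have cg : ContinuousOn (fun t => gradient Φ (x t)) (Ici t₀) :=
    (aux_gradC hΦ).continuous.comp_continuousOn cx
  have cΦ : ContinuousOn (fun t => Φ (x t)) (Ici t₀) := hΦ.continuous.comp_continuousOn cx
  have ci : ContinuousOn (fun t => ⟪x t - xstar, gradient Φ (x t)⟫) (Ici t₀) :=
    (cx.sub continuousOn_const).inner cg
  have hT0 : ∀ t ∈ Ici T, 0 < t := fun t ht => by
    have : T ≤ t := ht
    linarith
  have I3 : IntegrableOn (fun t => t * ⟪x t - xstar, gradient Φ (x t)⟫) (Set.Ici t₀) := by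
    refine aux_int (((α + 1) / 2 - 2) / 2) (by linarith) (by linarith) (continuousOn_id.mul ci) hD
      (fun t ht => mul_nonneg (hT0 t ht).le ((hf t).trans (hc t))) fun t ht => ?_
    refine le_trans ?_ (hbd t ht)
    have := hT0 t ht
    have : 0 ≤ (α - 1 - (α + 1) / 2) * (t * ‖x' t‖ ^ 2) :=
      mul_nonneg (by linarith) (by positivity)
    linarith
  have I2 : IntegrableOn (fun t => t * ‖x' t‖ ^ 2) (Set.Ici t₀) := by
    refine aux_int (α - 1 - (α + 1) / 2) (by linarith) (by linarith)
      (continuousOn_id.mul (cx'.norm.pow 2)) hD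
      (fun t ht => mul_nonneg (hT0 t ht).le (by positivity)) fun t ht => ?_
    refine le_trans ?_ (hbd t ht)
    have : 0 ≤ ((α + 1) / 2 - 2) / 2 * (t * ⟪x t - xstar, gradient Φ (x t)⟫) :=
      mul_nonneg (by linarith) (mul_nonneg (hT0 t ht).le ((hf t).trans (hc t)))
    linarith
  have I1 : IntegrableOn (fun t => t * (Φ (x t) - Φ xstar)) (Set.Ici t₀) := by
    refine aux_int 1 one_pos (T := T) (by linarith)
      (continuousOn_id.mul (cΦ.sub continuousOn_const))
      (I3.mono_set (fun t ht => ?_))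
      (fun t ht => mul_nonneg (hT0 t ht).le (hf t)) fun t ht => ?_
    · have : T < t := ht
      exact mem_Ici.2 (by linarith)
    · rw [one_mul]
      exact mul_le_mul_of_nonneg_left (hc t) (hT0 t ht).le
  have I4 : IntegrableOn (fun t => ⟪x t - xstar, gradient Φ (x t)⟫) (Set.Ici t₀) := by
    refine aux_int T (hT0 T self_mem_Ici) (T := T) (by linarith) ci
      (I3.mono_set (fun t ht => ?_))
      (fun t ht => (hf t).trans (hc t)) fun t ht => ?_
    · have : T < t := ht
      exact mem_Ici.2 (by linarith)
    · exact mul_le_mul_of_nonneg_right ht ((hf t).trans (hc t))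
  -- decay of `t (Φ (x t) - min Φ)`
  have tf : Tendsto (fun t => t * (Φ (x t) - Φ xstar)) atTop (𝓝 0) := by
    have hz : Tendsto (fun t : ℝ => (L1 + 1) / (t - β)) atTop (𝓝 0) :=
      tendsto_const_nhds.div_atTop (tendsto_atTop_add_const_right atTop (-β) tendsto_id)
    refine squeeze_zero' ?_ ?_ hz
    · filter_upwards [eventually_ge_atTop T] with t ht
      exact mul_nonneg (hT0 t ht).le (hf t)
    · filter_upwards [eventually_ge_atTop T, hL1.eventually_lt_const (lt_add_one L1)] with t ht hlt
      have := hlow t ht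
      rw [le_div_iff₀ (by linarith)]
      linarith
  -- convergence of `p`
  have hp : ∃ L, Tendsto (fun t => (α - 1) * (1 / 2 * ⟪x t - xstar, x t - xstar⟫) +
      t * ⟪x t - xstar, x' t + β • gradient Φ (x t)⟫) atTop (𝓝 L) := by
    have hne : (α - 3) / 2 ≠ 0 := by
      have : 0 < (α - 3) / 2 := by linarith
      exact this.ne'
    refine ⟨_, (((hL2.sub hL1).div_const ((α - 3) / 2)).add (tf.const_mul β)).congr fun t => ?_⟩
    rw [← eq_sub_iff_add_eq, div_eq_iff hne]
    ring
  obtain ⟨P, hP⟩ := hp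
  have hGl := intervalIntegral_tendsto_integral_Ioi (f := fun t => ⟪x t - xstar, gradient Φ (x t)⟫)
    t₀ (I4.mono_set Ioi_subset_Ici_self) tendsto_id
  set J := ∫ t in Ioi t₀, ⟪x t - xstar, gradient Φ (x t)⟫ with hJ
  have hGd : ∀ t ∈ Ici T, HasDerivAt
      (fun u => ∫ s in t₀..u, ⟪x s - xstar, gradient Φ (x s)⟫)
      ⟪x t - xstar, gradient Φ (x t)⟫ t := by
    intro t ht
    have ht' : T ≤ t := ht
    have hto : t ∈ Ioi t₀ := mem_Ioi.2 (by linarith)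
    refine intervalIntegral.integral_hasDerivAt_right ?_ ?_ ?_
    · refine ContinuousOn.intervalIntegrable (ci.mono ?_)
      rw [uIcc_of_le (le_of_lt hto)]
      exact Icc_subset_Ici_self
    · exact (ci.mono Ioi_subset_Ici_self).stronglyMeasurableAtFilter isOpen_Ioi t hto
    · exact ci.continuousAt (Ici_mem_nhds hto)
  have hyd : ∀ t ∈ Ici T, HasDerivAt (fun t => 1 / 2 * ⟪x t - xstar, x t - xstar⟫)
      ⟪x t - xstar, x' t⟫ t := by
    intro t ht
    have ht' : T ≤ t := ht
    have hy : HasDerivAt (fun t => x t - xstar) (x' t) t :=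
      (h1 t (mem_Ici.2 (by linarith))).sub_const xstar
    refine HasDerivAt.congr_deriv ((hy.inner ℝ hy).const_mul (1 / 2 : ℝ)) ?_
    rw [real_inner_comm (x t - xstar) (x' t)]
    ring
  have hα1 : 0 < α - 1 := by linarith
  have hlim := aux_lim (L := (P + (α - 1) * (β * J)) / (α - 1)) hα1
    (fun t ht => (hyd t ht).add ((hGd t ht).const_mul β)) (by
      rw [mul_div_cancel₀ _ hα1.ne']
      refine (hP.add ((hGl.const_mul β).const_mul (α - 1))).congr fun t => ?_
      simp only [Pi.add_apply, inner_add_right, real_inner_smul_right, id]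
      ring)
  have hq : Tendsto (fun t => 1 / 2 * ⟪x t - xstar, x t - xstar⟫) atTop
      (𝓝 ((P + (α - 1) * (β * J)) / (α - 1) - β * J)) := by
    refine (hlim.sub (hGl.const_mul β)).congr fun t => ?_
    simp
  refine ⟨I1, I2, I3, ⟨_, ((hq.const_mul 2).sqrt).congr fun t => ?_⟩,
    ⟨_, (hP.sub (hq.const_mul (α - 1))).congr fun t => ?_⟩⟩
  · rw [real_inner_self_eq_norm_sq, ← mul_assoc]
    norm_num
  · ring
end
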